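/- In the parabolic case α = β = 1 (so X = [[1,1],[0,1]] and Y = [[1,0],[z,1]]), for any z ∈ ℂ and any Farey neighbours p/q < r/s in lowest terms with p, r ≥ 0, q, s ≥ 1, qr − ps = 1, and both fractions in [0,1], one has tr(W_{p/q}(z) · W_{r/s}(z)) = 4 − tr(W_{(p+r)/(q+s)}(z)). -/

import Mathlib

/-!
The letters of `W_{p/q} W_{r/s}` are those of the mediant word, except that the letter in position
`n = q + s` is inverted. In any Farey word of length `2 * n` the letters in positions `i` and
`2 * n - i` are mutually inverse for `0 < i < n`, so the word has the form `A ℓ_n A⁻¹ ℓ_{2n}`. Since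
`ℓ_n + ℓ_n⁻¹` is the scalar matrix `tr ℓ_n`, the two words add up to `tr ℓ_n • ℓ_{2n}`.
-/

/-- Modified ceiling: `⌈x⌉` if `x ∉ ℤ`, and `x + 1` if `x ∈ ℤ`. -/
def mceil (x : ℚ) : ℤ := if x.den = 1 then x.num + 1 else ⌈x⌉

/-- The sign `ε_i = (−1)^{⌈pi/q⌉' + i + 1}` of the `i`-th letter of the Farey word `W_{p/q}`. -/
def fareySign (p q i : ℕ) : ℤˣ := (-1) ^ (mceil ((p * i : ℚ) / q) + (i : ℤ) + 1)

/-- The matrix `X = [[α, 1], [0, α⁻¹]]`. -/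
noncomputable def Xmat (α : ℂ) : Matrix (Fin 2) (Fin 2) ℂ := !![α, 1; 0, α⁻¹]

/-- The matrix `Y = [[β, 0], [z, β⁻¹]]`. -/
noncomputable def Ymat (β z : ℂ) : Matrix (Fin 2) (Fin 2) ℂ := !![β, 0; z, β⁻¹]

/-- The `i`-th letter (`1 ≤ i ≤ 2q`) of the Farey word `W_{p/q}`, interpreted as a matrix:
it is `Y^{ε_i}` if `i` is odd and `X^{ε_i}` if `i` is even. -/
noncomputable def fareyLetterM (α β z : ℂ) (p q i : ℕ) : Matrix (Fin 2) (Fin 2) ℂ :=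
  let M := if i % 2 = 1 then Ymat β z else Xmat α
  if fareySign p q i = 1 then M else M⁻¹

/-- The Farey word `W_{p/q}(z)`, the product `ℓ_1 ℓ_2 ⋯ ℓ_{2q}` of its letters interpreted
as matrices. -/
noncomputable def fareyWord (α β z : ℂ) (p q : ℕ) : Matrix (Fin 2) (Fin 2) ℂ :=
  ((List.range (2 * q)).map (fun j => fareyLetterM α β z p q (j + 1))).prod

/-- The Farey polynomial `Φ_{p/q}(z) = tr W_{p/q}(z)`. -/
noncomputable def fareyPoly (α β z : ℂ) (p q : ℕ) : ℂ := Matrix.trace (fareyWord α β z p q)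

section SignedWords

variable {R : Type*} [CommRing R]

lemma add_inv_eq_trace_smul_one {M : Matrix (Fin 2) (Fin 2) R} (hM : M.det = 1) :
    M + M⁻¹ = M.trace • (1 : Matrix (Fin 2) (Fin 2) R) := by
  rw [Matrix.inv_def, hM, Ring.inverse_one, one_smul, Matrix.adjugate_fin_two]
  ext i j
  fin_cases i <;> fin_cases j <;> simp [Matrix.trace_fin_two, add_comm]

lemma zpow_neg_add_zpow_eq_trace_smul_one {M : Matrix (Fin 2) (Fin 2) R} (hM : M.det = 1)
    (ε : ℤˣ) :
    M ^ ((-ε : ℤˣ) : ℤ) + M ^ (ε : ℤ) = M.trace • (1 : Matrix (Fin 2) (Fin 2) R) := by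
  rcases Int.units_eq_one_or ε with rfl | rfl
  · simpa [Matrix.zpow_neg_one, add_comm] using add_inv_eq_trace_smul_one hM
  · simpa [Matrix.zpow_neg_one] using add_inv_eq_trace_smul_one hM

lemma trace_zpow_units {M : Matrix (Fin 2) (Fin 2) R} (hM : M.det = 1) (ε : ℤˣ) :
    (M ^ (ε : ℤ)).trace = M.trace := by
  rcases Int.units_eq_one_or ε with rfl | rfl
  · simp
  · rw [Units.val_neg, Units.val_one, Matrix.zpow_neg_one, Matrix.inv_def, hM, Ring.inverse_one,
      one_smul, Matrix.adjugate_fin_two]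
    simp [Matrix.trace_fin_two, add_comm]

lemma prod_map_range_add {M : Type*} [Monoid M] (f : ℕ → M) (m n : ℕ) :
    ((List.range (m + n)).map f).prod =
      ((List.range m).map f).prod * ((List.range n).map fun j => f (m + j)).prod := by
  simp [List.range_add, Function.comp_def]

lemma prod_map_range_mul_prod_map_range_eq_one {M : Type*} [Monoid M] {k : ℕ} {f g : ℕ → M}
    (h : ∀ i j, i + j + 1 = k → f i * g j = 1) :
    ((List.range k).map f).prod * ((List.range k).map g).prod = 1 := by
  induction k generalizing g with
  | zero => simp
  | succ k ih =>
    have hinner : ((List.range k).map f).prod * ((List.range k).map fun j => g (j + 1)).prod = 1 :=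
      ih fun i j hij => h i (j + 1) (by omega)
    rw [List.prod_range_succ, List.prod_range_succ', mul_assoc, ← mul_assoc (f k),
      h k 0 (by omega), one_mul, hinner]

/-- The product `A₁ ^ ε₁ * ⋯ * Aₙ ^ εₙ`, with letters numbered from `1` as in a Farey word. -/
noncomputable def signedWord (A : ℕ → Matrix (Fin 2) (Fin 2) R) (ε : ℕ → ℤˣ) (n : ℕ) :
    Matrix (Fin 2) (Fin 2) R :=
  ((List.range n).map fun j => A (j + 1) ^ (ε (j + 1) : ℤ)).prod

/-- The sign sequence `ε` with the sign in position `n` reversed. -/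
def flipAt (ε : ℕ → ℤˣ) (n : ℕ) : ℕ → ℤˣ := Function.update ε n (-ε n)

lemma flipAt_self (ε : ℕ → ℤˣ) (n : ℕ) : flipAt ε n n = -ε n := by
  simp [flipAt]

lemma flipAt_of_ne (ε : ℕ → ℤˣ) {n i : ℕ} (h : i ≠ n) : flipAt ε n i = ε i := by
  simp [flipAt, h]

lemma signedWord_add (A : ℕ → Matrix (Fin 2) (Fin 2) R) (ε : ℕ → ℤˣ) (m n : ℕ) :
    signedWord A ε (m + n) =
      signedWord A ε m * signedWord (fun i => A (m + i)) (fun i => ε (m + i)) n :=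
  prod_map_range_add _ m n

lemma signedWord_succ (A : ℕ → Matrix (Fin 2) (Fin 2) R) (ε : ℕ → ℤˣ) (n : ℕ) :
    signedWord A ε (n + 1) = signedWord A ε n * A (n + 1) ^ (ε (n + 1) : ℤ) :=
  List.prod_range_succ _ n

lemma signedWord_congr {A B : ℕ → Matrix (Fin 2) (Fin 2) R} {ε δ : ℕ → ℤˣ} {n : ℕ}
    (hAB : ∀ i, 0 < i → i ≤ n → A i = B i) (hεδ : ∀ i, 0 < i → i ≤ n → ε i = δ i) :
    signedWord A ε n = signedWord B δ n := by
  refine congrArg List.prod (List.map_congr_left fun j hj => ?_)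
  have hj' : j + 1 ≤ n := List.mem_range.1 hj
  rw [hAB _ j.succ_pos hj', hεδ _ j.succ_pos hj']

variable {A : ℕ → Matrix (Fin 2) (Fin 2) R} {ε : ℕ → ℤˣ}

lemma signedWord_mul_signedWord_eq_one {B : ℕ → Matrix (Fin 2) (Fin 2) R} {δ : ℕ → ℤˣ} {k : ℕ}
    (hdet : ∀ i, (A i).det = 1)
    (hB : ∀ i j, 0 < i → 0 < j → i + j = k + 1 → B j = A i)
    (hδ : ∀ i j, 0 < i → 0 < j → i + j = k + 1 → δ j = -ε i) :
    signedWord A ε k * signedWord B δ k = 1 := by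
  refine prod_map_range_mul_prod_map_range_eq_one fun i j hij => ?_
  rw [hB (i + 1) (j + 1) i.succ_pos j.succ_pos (by omega),
    hδ (i + 1) (j + 1) i.succ_pos j.succ_pos (by omega), Units.val_neg]
  simpa using Matrix.zpow_neg_mul_zpow_self (-(ε (i + 1) : ℤ))
    (A := A (i + 1)) (by rw [hdet]; exact isUnit_one)

lemma signedWord_flipAt_add_signedWord {n : ℕ} (hn : 0 < n) (hdet : ∀ i, (A i).det = 1)
    (hA : ∀ i j, 0 < i → i < n → i + j = 2 * n → A j = A i)
    (hε : ∀ i j, 0 < i → i < n → i + j = 2 * n → ε j = -ε i) :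
    signedWord A (flipAt ε n) (2 * n) + signedWord A ε (2 * n) =
      (A n).trace • A (2 * n) ^ (ε (2 * n) : ℤ) := by
  obtain ⟨k, rfl⟩ := Nat.exists_eq_add_one.2 hn
  have hsplit (δ : ℕ → ℤˣ) : signedWord A δ (2 * (k + 1)) =
      signedWord A δ k * A (k + 1) ^ (δ (k + 1) : ℤ) *
        signedWord (fun i => A (k + 1 + i)) (fun i => δ (k + 1 + i)) k *
          A (2 * (k + 1)) ^ (δ (2 * (k + 1)) : ℤ) := by
    rw [show 2 * (k + 1) = k + 1 + k + 1 by ring, signedWord_succ, signedWord_add, signedWord_succ]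
  have hcancel : signedWord A ε k *
      signedWord (fun i => A (k + 1 + i)) (fun i => ε (k + 1 + i)) k = 1 :=
    signedWord_mul_signedWord_eq_one hdet
      (fun i j hi hj hij => hA i _ hi (by omega) (by omega))
      (fun i j hi hj hij => hε i _ hi (by omega) (by omega))
  have hleft : signedWord A (flipAt ε (k + 1)) k = signedWord A ε k :=
    signedWord_congr (fun _ _ _ => rfl) fun i _ hi => flipAt_of_ne ε (by omega)
  have hright : signedWord (fun i => A (k + 1 + i)) (fun i => flipAt ε (k + 1) (k + 1 + i)) k =
      signedWord (fun i => A (k + 1 + i)) (fun i => ε (k + 1 + i)) k :=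
    signedWord_congr (fun _ _ _ => rfl) fun i hi _ => flipAt_of_ne ε (by omega)
  rw [hsplit, hsplit, hleft, hright, flipAt_self, flipAt_of_ne ε (by omega), ← add_mul, ← add_mul,
    ← mul_add, zpow_neg_add_zpow_eq_trace_smul_one (hdet _), mul_smul_comm, mul_one,
    smul_mul_assoc, hcancel, smul_mul_assoc, one_mul]

end SignedWords

section Signs

lemma mceil_eq_floor_add_one (x : ℚ) : mceil x = ⌊x⌋ + 1 := by
  unfold mceil
  split_ifs with hden
  · conv_rhs => rw [← Rat.coe_int_num_of_den_eq_one hden, Int.floor_intCast]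
  · refine (Int.ceil_eq_floor_add_one_iff_notMem x).2 ?_
    rintro ⟨n, rfl⟩
    exact hden (Rat.den_intCast n)

lemma fareySign_eq_negOnePow (p q i : ℕ) :
    fareySign p q i = ((p * i : ℤ) / q + i).negOnePow := by
  have hfloor : ⌊(p * i : ℚ) / q⌋ = (p * i : ℤ) / q := by
    simpa only [Nat.cast_mul] using Rat.floor_natCast_div_natCast (p * i) q
  rw [fareySign, mceil_eq_floor_add_one, hfloor, ← Int.negOnePow_def, Int.negOnePow_eq_iff]
  exact ⟨1, by ring⟩

lemma fareySign_eq_neg_of_add_eq_two_mul {p q i j : ℕ} (hpq : p.Coprime q) (hi : 0 < i)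
    (hiq : i < q) (hij : i + j = 2 * q) : fareySign p q j = -fareySign p q i := by
  have hq : (q : ℤ) ≠ 0 := by omega
  have hndvd : ¬ (q : ℤ) ∣ p * i := by
    norm_cast
    exact fun h => Nat.not_dvd_of_pos_of_lt hi hiq (hpq.symm.dvd_of_dvd_mul_left h)
  have hheight : (p * j : ℤ) / q = 2 * p - 1 - (p * i : ℤ) / q := by
    obtain rfl : j = 2 * q - i := by omega
    have hpj : (p * (2 * q - i : ℕ) : ℤ) = -(p * i) + 2 * p * q := by
      push_cast [show i ≤ 2 * q by omega]
      ring
    rw [hpj, Int.add_mul_ediv_right _ _ hq, Int.neg_ediv, if_neg hndvd,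
      Int.sign_eq_one_of_pos (by omega)]
    ring
  rw [fareySign_eq_negOnePow, fareySign_eq_negOnePow, hheight, ← Int.negOnePow_succ,
    Int.negOnePow_eq_iff]
  exact ⟨p - 1 - (p * i : ℤ) / q + q - i, by
    linear_combination (by exact_mod_cast hij : (i + j : ℤ) = 2 * q)⟩

lemma coprime_mediant {p q r s : ℕ} (hnbr : q * r = p * s + 1) :
    (p + r).Coprime (q + s) := by
  rw [← Nat.isCoprime_iff_coprime]
  have hnbr' : (q * r : ℤ) = p * s + 1 := by exact_mod_cast hnbr
  exact ⟨q, -p, by push_cast; linear_combination hnbr'⟩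

section Heights

-- Over position `i`, `u` and `v` measure how far an integral height lies above the line of slope
-- `p / q` and below the line of slope `r / s`; the claim is that no such height separates the
-- former from the mediant line. Indeed `1 ≤ u ≤ v` would force `u = v = 1`, as `v ≥ 2` contradicts
-- `u * s + v * q = i ≤ 2 * q`, and then `i = q + s`.
lemma nonpos_iff_le_of_eq_mul_add_mul {q s i u v : ℤ} (hq : 0 < q) (hs : 0 < s) (hi : 0 ≤ i)
    (hiq : i ≤ 2 * q) (hne : i ≠ q + s) (h : i = u * s + v * q) : u ≤ 0 ↔ u ≤ v := by
  constructor
  · intro hu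
    by_contra! hv
    nlinarith
  · intro huv
    by_contra! hu
    have hv : v < 2 := by nlinarith
    obtain ⟨rfl, rfl⟩ : u = 1 ∧ v = 1 := by omega
    omega

variable {p q r s : ℤ}

lemma ediv_mediant_eq_left {i : ℤ} (hq : 0 < q) (hs : 0 < s) (hnbr : q * r = p * s + 1)
    (hi : 0 ≤ i) (hiq : i ≤ 2 * q) (hne : i ≠ q + s) : (p + r) * i / (q + s) = p * i / q := by
  refine eq_of_forall_le_iff fun k => ?_
  rw [Int.le_ediv_iff_mul_le (by omega), Int.le_ediv_iff_mul_le hq]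
  have hsep := nonpos_iff_le_of_eq_mul_add_mul (u := q * k - p * i) (v := r * i - s * k) hq hs hi
    hiq hne (by linear_combination -i * hnbr)
  constructor <;> intro hk
  · linarith [hsep.2 (by linarith)]
  · linarith [hsep.1 (by linarith)]

lemma ediv_mediant_eq_right {j : ℤ} (hq : 0 < q) (hs : 0 < s) (hnbr : q * r = p * s + 1)
    (hj : 0 ≤ j) (hjs : j ≤ 2 * s) (hne : q + j ≠ s) :
    (p + r) * (2 * q + j) / (q + s) = 2 * p + r * j / s := by
  refine eq_of_forall_le_iff fun k => ?_
  rw [Int.le_ediv_iff_mul_le (by omega), ← sub_le_iff_le_add', Int.le_ediv_iff_mul_le hs]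
  have hsep := nonpos_iff_le_of_eq_mul_add_mul (i := 2 * s - j) (u := s * (k - 2 * p) - r * j)
    (v := 2 + p * j - q * (k - 2 * p)) hs hq (by omega) (by omega) (by omega)
    (by linear_combination j * hnbr)
  constructor <;> intro hk
  · linarith [hsep.2 (by linarith)]
  · linarith [hsep.1 (by linarith)]

lemma ediv_left_middle (hq : 0 < q) (hnbr : q * r = p * s + 1) :
    p * (q + s) / q = p + r - 1 := by
  rw [Int.ediv_eq_iff_of_pos hq]
  constructor <;> linarith

lemma ediv_right_middle (hs : 0 < s) (hnbr : q * r = p * s + 1) :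
    r * (s - q) / s = r - p - 1 := by
  rw [Int.ediv_eq_iff_of_pos hs]
  constructor <;> linarith

end Heights

lemma fareySign_mediant_middle (p r : ℕ) {q s : ℕ} (hs : 0 < s) :
    fareySign (p + r) (q + s) (q + s) = (p + r + q + s : ℤ).negOnePow := by
  rw [fareySign_eq_negOnePow, Int.mul_ediv_cancel _ (by omega)]
  push_cast
  ring_nf

lemma fareySign_left_eq_flipAt {p q r s i : ℕ} (hs : 0 < s) (hnbr : q * r = p * s + 1)
    (hi : 0 < i) (hiq : i ≤ 2 * q) :
    fareySign p q i = flipAt (fareySign (p + r) (q + s)) (q + s) i := by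
  have hnbr' : (q * r : ℤ) = p * s + 1 := by exact_mod_cast hnbr
  rcases eq_or_ne i (q + s) with rfl | hne
  · rw [flipAt_self, fareySign_mediant_middle p r hs, fareySign_eq_negOnePow, Nat.cast_add,
      ediv_left_middle (by omega) hnbr', ← Int.negOnePow_succ, Int.negOnePow_eq_iff]
    exact ⟨-1, by ring⟩
  · rw [flipAt_of_ne _ hne, fareySign_eq_negOnePow, fareySign_eq_negOnePow, Nat.cast_add,
      Nat.cast_add, ediv_mediant_eq_left (by omega) (by omega) hnbr' (by omega) (by omega)
        (by omega)]

lemma fareySign_right_eq_flipAt {p q r s j : ℕ} (hs : 0 < s) (hnbr : q * r = p * s + 1)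
    (hjs : j ≤ 2 * s) :
    fareySign r s j = flipAt (fareySign (p + r) (q + s)) (q + s) (2 * q + j) := by
  have hq : 0 < q := Nat.pos_of_ne_zero (by rintro rfl; simp at hnbr)
  have hnbr' : (q * r : ℤ) = p * s + 1 := by exact_mod_cast hnbr
  rcases eq_or_ne (2 * q + j) (q + s) with hmid | hne
  · rw [hmid, flipAt_self, fareySign_mediant_middle p r hs, fareySign_eq_negOnePow,
      show (j : ℤ) = s - q by omega, ediv_right_middle (by omega) hnbr', ← Int.negOnePow_succ,
      Int.negOnePow_eq_iff]
    exact ⟨-p - q - 1, by ring⟩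
  · rw [flipAt_of_ne _ hne, fareySign_eq_negOnePow, fareySign_eq_negOnePow]
    push_cast
    rw [ediv_mediant_eq_right (by omega) (by omega) hnbr' (by omega) (by omega) (by omega),
      Int.negOnePow_eq_iff]
    exact ⟨-p - q, by ring⟩

end Signs

lemma det_Xmat {α : ℂ} (hα : α ≠ 0) : (Xmat α).det = 1 := by
  simp [Xmat, Matrix.det_fin_two, hα]

lemma det_Ymat {β : ℂ} (hβ : β ≠ 0) (z : ℂ) : (Ymat β z).det = 1 := by
  simp [Ymat, Matrix.det_fin_two, hβ]

lemma trace_Xmat (α : ℂ) : (Xmat α).trace = α + α⁻¹ := by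
  simp [Xmat, Matrix.trace_fin_two]

lemma trace_Ymat (β z : ℂ) : (Ymat β z).trace = β + β⁻¹ := by
  simp [Ymat, Matrix.trace_fin_two]

section FareyWords

variable (α β z : ℂ)

/-- The letter in position `i` of a Farey word before its sign is applied: `Y` if `i` is odd,
`X` if `i` is even. -/
noncomputable def fareyGenerator (i : ℕ) : Matrix (Fin 2) (Fin 2) ℂ :=
  if i % 2 = 1 then Ymat β z else Xmat α

lemma fareyGenerator_of_even {i : ℕ} (hi : Even i) : fareyGenerator α β z i = Xmat α :=
  if_neg (by rw [Nat.even_iff.1 hi]; exact zero_ne_one)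

lemma fareyGenerator_of_odd {i : ℕ} (hi : Odd i) : fareyGenerator α β z i = Ymat β z :=
  if_pos (Nat.odd_iff.1 hi)

lemma fareyGenerator_eq_of_even_add {i j : ℕ} (h : Even (i + j)) :
    fareyGenerator α β z i = fareyGenerator α β z j := by
  rw [Nat.even_add] at h
  unfold fareyGenerator
  simp only [← Nat.odd_iff, ← Nat.not_even_iff_odd, h]

variable {α β} in
lemma det_fareyGenerator (hα : α ≠ 0) (hβ : β ≠ 0) (i : ℕ) :
    (fareyGenerator α β z i).det = 1 := by
  unfold fareyGenerator
  split_ifs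
  · exact det_Ymat hβ z
  · exact det_Xmat hα

lemma trace_fareyGenerator (i : ℕ) :
    (fareyGenerator α β z i).trace = if Even i then α + α⁻¹ else β + β⁻¹ := by
  split_ifs with hi
  · rw [fareyGenerator_of_even α β z hi, trace_Xmat]
  · rw [fareyGenerator_of_odd α β z (Nat.not_even_iff_odd.1 hi), trace_Ymat]

lemma fareyLetterM_eq_zpow (p q i : ℕ) :
    fareyLetterM α β z p q i = fareyGenerator α β z i ^ (fareySign p q i : ℤ) := by
  change (if fareySign p q i = 1 then fareyGenerator α β z i else (fareyGenerator α β z i)⁻¹) = _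
  rcases Int.units_eq_one_or (fareySign p q i) with h | h <;> simp [h, Matrix.zpow_neg_one]

lemma fareyWord_eq_signedWord (p q : ℕ) :
    fareyWord α β z p q = signedWord (fareyGenerator α β z) (fareySign p q) (2 * q) := by
  simp only [fareyWord, signedWord, fareyLetterM_eq_zpow]

lemma fareyWord_mul_fareyWord_eq_signedWord {p q r s : ℕ} (hs : 0 < s)
    (hnbr : q * r = p * s + 1) :
    fareyWord α β z p q * fareyWord α β z r s =
      signedWord (fareyGenerator α β z) (flipAt (fareySign (p + r) (q + s)) (q + s))
        (2 * (q + s)) := by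
  rw [mul_add, signedWord_add, fareyWord_eq_signedWord, fareyWord_eq_signedWord]
  congr 1
  · exact signedWord_congr (fun _ _ _ => rfl)
      fun i hi hiq => fareySign_left_eq_flipAt hs hnbr hi hiq
  · exact signedWord_congr
      (fun j _ _ => fareyGenerator_eq_of_even_add α β z ⟨q + j, by ring⟩)
      fun j _ hjs => fareySign_right_eq_flipAt hs hnbr hjs

variable {α β} in
theorem fareyWord_mul_fareyWord_add_fareyWord (hα : α ≠ 0) (hβ : β ≠ 0) {p q r s : ℕ}
    (hs : 0 < s) (hnbr : q * r = p * s + 1) :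
    fareyWord α β z p q * fareyWord α β z r s + fareyWord α β z (p + r) (q + s) =
      (if Even (q + s) then α + α⁻¹ else β + β⁻¹) •
        Xmat α ^ (fareySign (p + r) (q + s) (2 * (q + s)) : ℤ) := by
  rw [fareyWord_mul_fareyWord_eq_signedWord α β z hs hnbr, fareyWord_eq_signedWord,
    signedWord_flipAt_add_signedWord (by omega) (det_fareyGenerator z hα hβ)
      (fun i j _ _ hij => fareyGenerator_eq_of_even_add α β z ⟨q + s, by omega⟩)
      (fun i j hi hin hij => fareySign_eq_neg_of_add_eq_two_mul (coprime_mediant hnbr) hi hin hij),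
    trace_fareyGenerator, fareyGenerator_of_even α β z (even_two_mul _)]

end FareyWords

theorem product_parabolic_general {α β : ℂ} (hα : α ≠ 0) (hβ : β ≠ 0) (z : ℂ) (p q r s : ℕ)
    (hs : 1 ≤ s) (hnbr : q * r = p * s + 1) :
    Matrix.trace (fareyWord α β z p q * fareyWord α β z r s) =
      (if Even (q + s) then α + α⁻¹ else β + β⁻¹) * (α + α⁻¹) -
        Matrix.trace (fareyWord α β z (p + r) (q + s)) := by
  rw [eq_sub_iff_add_eq, ← Matrix.trace_add, fareyWord_mul_fareyWord_add_fareyWord z hα hβ hs hnbr,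
    Matrix.trace_smul, smul_eq_mul, trace_zpow_units (det_Xmat hα), trace_Xmat]

/-- Product lemma in the parabolic case `α = β = 1`: for Farey neighbours `p/q < r/s`
in `[0,1]`, `tr(W_{p/q} W_{r/s}) = 4 − tr(W_{(p+r)/(q+s)})`. -/
theorem product_parabolic (z : ℂ)
    (p q r s : ℕ) (hq : 1 ≤ q) (hs : 1 ≤ s) (hpq : p ≤ q) (hrs : r ≤ s)
    (hcop1 : Nat.Coprime p q) (hcop2 : Nat.Coprime r s) (hnbr : q * r = p * s + 1) :
    Matrix.trace (fareyWord 1 1 z p q * fareyWord 1 1 z r s) =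
      4 - Matrix.trace (fareyWord 1 1 z (p + r) (q + s)) := by
  rw [product_parabolic_general one_ne_zero one_ne_zero z p q r s hs hnbr]
  norm_num
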